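/- In any nondegenerate triangle, the distance from the circumcenter X3 to the incenter X1 and the distance from X3 to the centroid X2 satisfy dist(X3, X2) ≤ dist(X3, X1) ≤ 3·dist(X3, X2). -/

import Mathlib

/-- The point with normalized barycentric coordinates `(x : y : z)`
with respect to the triangle `A B C`. -/
noncomputable def bary (A B C : EuclideanSpace ℝ (Fin 2)) (x y z : ℝ) :
    EuclideanSpace ℝ (Fin 2) :=
  (x + y + z)⁻¹ • (x • A + y • B + z • C)

/-- The triangle center with barycentric coordinates
`(f a b c : f b c a : f c a b)` where `a, b, c` are the side lengths. -/
noncomputable def tcenter (f : ℝ → ℝ → ℝ → ℝ) (A B C : EuclideanSpace ℝ (Fin 2)) :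
    EuclideanSpace ℝ (Fin 2) :=
  bary A B C (f (dist B C) (dist C A) (dist A B))
    (f (dist C A) (dist A B) (dist B C))
    (f (dist A B) (dist B C) (dist C A))

/-!
With `a, b, c` the side lengths, Leibniz's formula for the squared distance to a weighted mean gives
`OG² = R² - (a² + b² + c²) / 9` and `OI² = R² - abc / (a + b + c)` (Euler) for every point `O` at
distance `R` from all three vertices. So `OG ≤ OI` amounts to `9abc ≤ (a² + b² + c²)(a + b + c)`,
and `OI ≤ 3 OG` to `a² + b² + c² - abc / (a + b + c) ≤ 8 R²`. The same formula, applied at a vertex,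
gives `R² = (abc)² / (16 S²)` with `S` the area, so by Heron's formula both are polynomial
inequalities in the sides. In each, the difference of the two sides is a combination of
`(a - b)²`, `(b - c)²`, `(c - a)²` with nonnegative coefficients, which are linear for `OG ≤ OI`
and multiples of `(a + b - c)³`, `(b + c - a)³`, `(c + a - b)³` for `OI ≤ 3 OG`.
-/

section SideLengths

variable {a b c : ℝ}

/-- Heron's product `16 S²`, where `S` is the area of a triangle with side lengths `a, b, c`. -/
def heronProduct (a b c : ℝ) : ℝ :=
  (a + b + c) * (b + c - a) * (c + a - b) * (a + b - c)

theorem heronProduct_pos (ha : a < b + c) (hb : b < c + a) (hc : c < a + b) :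
    0 < heronProduct a b c :=
  mul_pos (mul_pos (mul_pos (by linarith) (sub_pos.2 ha)) (sub_pos.2 hb)) (sub_pos.2 hc)

theorem nine_mul_prod_le_sum_sq_mul_sum (ha : 0 ≤ a) (hb : 0 ≤ b) (hc : 0 ≤ c) :
    9 * (a * b * c) ≤ (a ^ 2 + b ^ 2 + c ^ 2) * (a + b + c) := by
  have hsos : 0 ≤ (a + b + 3 * c) * (a - b) ^ 2 + (b + c + 3 * a) * (b - c) ^ 2 +
      (c + a + 3 * b) * (c - a) ^ 2 := by positivity
  linarith

theorem sum_sq_mul_sum_sub_prod_mul_heronProduct_le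
    (ha : a ≤ b + c) (hb : b ≤ c + a) (hc : c ≤ a + b) :
    ((a ^ 2 + b ^ 2 + c ^ 2) * (a + b + c) - a * b * c) * heronProduct a b c ≤
      8 * (a * b * c) ^ 2 * (a + b + c) := by
  have := sub_nonneg.2 ha
  have := sub_nonneg.2 hb
  have := sub_nonneg.2 hc
  have hsos : 0 ≤ (a + b + c) ^ 2 * ((b + c - a) ^ 3 * (b - c) ^ 2 +
      (c + a - b) ^ 3 * (c - a) ^ 2 + (a + b - c) ^ 3 * (a - b) ^ 2) := by positivity
  unfold heronProduct
  linarith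

theorem sum_sq_sub_prod_div_sum_le (ha : a < b + c) (hb : b < c + a) (hc : c < a + b) :
    a ^ 2 + b ^ 2 + c ^ 2 - a * b * c / (a + b + c) ≤
      8 * ((a * b * c) ^ 2 / heronProduct a b c) := by
  have hs : 0 < a + b + c := by linarith
  rw [sub_div' hs.ne', ← mul_div_assoc, div_le_div_iff₀ hs (heronProduct_pos ha hb hc)]
  exact sum_sq_mul_sum_sub_prod_mul_heronProduct_le ha.le hb.le hc.le

end SideLengths

section StrictTriangleInequality

variable {V P : Type*} [NormedAddCommGroup V] [NormedSpace ℝ V] [StrictConvexSpace ℝ V]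
  [MetricSpace P] [NormedAddTorsor V P] {A B C : P}

theorem dist_lt_dist_add_dist_of_affineIndependent (h : AffineIndependent ℝ ![A, B, C]) :
    dist B C < dist C A + dist A B := by
  have hBAC : ¬ Wbtw ℝ B A C := fun hw =>
    affineIndependent_iff_not_collinear_set.1 h.comm_left hw.collinear
  simpa only [dist_comm, add_comm] using dist_lt_dist_add_dist_iff.2 hBAC

theorem heronProduct_dist_pos (h : AffineIndependent ℝ ![A, B, C]) :
    0 < heronProduct (dist B C) (dist C A) (dist A B) :=
  heronProduct_pos (dist_lt_dist_add_dist_of_affineIndependent h)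
    (dist_lt_dist_add_dist_of_affineIndependent h.comm_left.comm_right)
    (dist_lt_dist_add_dist_of_affineIndependent h.comm_right.comm_left)

end StrictTriangleInequality

section WeightedMeans

variable {E : Type*} [SeminormedAddCommGroup E] [InnerProductSpace ℝ E]

theorem norm_sq_sum_smul {ι : Type*} (s : Finset ι) (w : ι → ℝ) (v : ι → E) :
    ‖∑ i ∈ s, w i • v i‖ ^ 2 =
      (∑ i ∈ s, w i) * ∑ i ∈ s, w i * ‖v i‖ ^ 2 -
        (∑ i ∈ s, ∑ j ∈ s, w i * w j * ‖v i - v j‖ ^ 2) / 2 := by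
  have hinner (i j : ι) : inner ℝ (w i • v i) (w j • v j) =
      w j * (w i * ‖v i‖ ^ 2) / 2 + w i * (w j * ‖v j‖ ^ 2) / 2 -
        w i * w j * ‖v i - v j‖ ^ 2 / 2 := by
    rw [real_inner_smul_left, real_inner_smul_right, norm_sub_sq_real]
    ring
  have hswap : ∑ i ∈ s, ∑ j ∈ s, w j * (w i * ‖v i‖ ^ 2) =
      (∑ i ∈ s, w i) * ∑ i ∈ s, w i * ‖v i‖ ^ 2 := by
    rw [Finset.sum_comm, Finset.sum_mul_sum]
  rw [← real_inner_self_eq_norm_sq, sum_inner]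
  simp only [inner_sum, hinner, Finset.sum_sub_distrib, Finset.sum_add_distrib, ← Finset.sum_div,
    hswap, ← Finset.sum_mul_sum]
  ring

theorem sq_dist_centerMass {ι : Type*} {s : Finset ι} {w : ι → ℝ} (hw : ∑ i ∈ s, w i ≠ 0)
    (p : ι → E) (q : E) :
    dist q (s.centerMass w p) ^ 2 =
      (∑ i ∈ s, w i * dist q (p i) ^ 2) / ∑ i ∈ s, w i -
        (∑ i ∈ s, ∑ j ∈ s, w i * w j * dist (p i) (p j) ^ 2) / (2 * (∑ i ∈ s, w i) ^ 2) := by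
  have hsub : s.centerMass w p - q = (∑ i ∈ s, w i)⁻¹ • ∑ i ∈ s, w i • (p i - q) := by
    simp only [smul_sub, Finset.sum_sub_distrib, ← Finset.sum_smul, Finset.centerMass,
      inv_smul_smul₀ hw]
  rw [dist_comm, dist_eq_norm, hsub, norm_smul, mul_pow, norm_sq_sum_smul, norm_inv, inv_pow,
    Real.norm_eq_abs, sq_abs]
  simp only [sub_sub_sub_cancel_right, ← dist_eq_norm, dist_comm _ q]
  field_simp

theorem sq_dist_centerMass_three {x y z : ℝ} (hs : x + y + z ≠ 0) (A B C q : E) :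
    dist q (Finset.univ.centerMass ![x, y, z] ![A, B, C]) ^ 2 =
      (x * dist q A ^ 2 + y * dist q B ^ 2 + z * dist q C ^ 2) / (x + y + z) -
        (y * z * dist B C ^ 2 + z * x * dist C A ^ 2 + x * y * dist A B ^ 2) /
          (x + y + z) ^ 2 := by
  have hw : ∑ i, ![x, y, z] i = x + y + z := by simp [Fin.sum_univ_three]
  rw [sq_dist_centerMass (hw ▸ hs), hw]
  simp only [Fin.sum_univ_three, Matrix.cons_val, dist_self, dist_comm B A, dist_comm A C,
    dist_comm C B]
  field_simp
  ring

end WeightedMeans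

section TriangleCenters

variable {E : Type*} [NormedAddCommGroup E] [InnerProductSpace ℝ E] {A B C O : E} {R : ℝ}

/-- The triangle center with barycentric coordinate function `f`, as in `tcenter`, for a triangle
in an inner product space of any dimension. It is `0` when the three coordinates sum to `0`. -/
noncomputable def triangleCenter (f : ℝ → ℝ → ℝ → ℝ) (A B C : E) : E :=
  Finset.univ.centerMass
    ![f (dist B C) (dist C A) (dist A B), f (dist C A) (dist A B) (dist B C),
      f (dist A B) (dist B C) (dist C A)] ![A, B, C]

/-- The incenter `X1`, in barycentric form. -/
noncomputable def triangleIncenter (A B C : E) : E :=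
  triangleCenter (fun a _ _ => a) A B C

/-- The centroid `X2`, in barycentric form. -/
noncomputable def triangleCentroid (A B C : E) : E :=
  triangleCenter (fun _ _ _ => 1) A B C

/-- The circumcenter `X3`, in barycentric form. -/
noncomputable def triangleCircumcenter (A B C : E) : E :=
  triangleCenter (fun a b c => a ^ 2 * (a ^ 2 - b ^ 2 - c ^ 2)) A B C

theorem tcenter_eq_triangleCenter (f : ℝ → ℝ → ℝ → ℝ) (A B C : EuclideanSpace ℝ (Fin 2)) :
    tcenter f A B C = triangleCenter f A B C := by
  simp [tcenter, bary, triangleCenter, Finset.centerMass, Fin.sum_univ_three]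

theorem triangleCenter_rotate (f : ℝ → ℝ → ℝ → ℝ) (A B C : E) :
    triangleCenter f B C A = triangleCenter f A B C := by
  simp only [triangleCenter, Finset.centerMass, Fin.sum_univ_three, Matrix.cons_val]
  congr 1
  · ring
  · abel

theorem sq_dist_triangleCentroid (hA : dist O A = R) (hB : dist O B = R) (hC : dist O C = R) :
    dist O (triangleCentroid A B C) ^ 2 =
      R ^ 2 - (dist B C ^ 2 + dist C A ^ 2 + dist A B ^ 2) / 9 := by
  rw [triangleCentroid, triangleCenter, sq_dist_centerMass_three (by norm_num), hA, hB, hC]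
  ring

theorem sq_dist_triangleIncenter (hs : dist B C + dist C A + dist A B ≠ 0)
    (hA : dist O A = R) (hB : dist O B = R) (hC : dist O C = R) :
    dist O (triangleIncenter A B C) ^ 2 =
      R ^ 2 - dist B C * dist C A * dist A B / (dist B C + dist C A + dist A B) := by
  rw [triangleIncenter, triangleCenter, sq_dist_centerMass_three hs, hA, hB, hC]
  field_simp

theorem dist_triangleCentroid_le_dist_triangleIncenter
    (hs : 0 < dist B C + dist C A + dist A B)
    (hA : dist O A = R) (hB : dist O B = R) (hC : dist O C = R) :
    dist O (triangleCentroid A B C) ≤ dist O (triangleIncenter A B C) := by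
  rw [← sq_le_sq₀ dist_nonneg dist_nonneg, sq_dist_triangleCentroid hA hB hC,
    sq_dist_triangleIncenter hs.ne' hA hB hC]
  apply sub_le_sub_left
  rw [div_le_div_iff₀ hs (by norm_num), mul_comm _ 9]
  exact nine_mul_prod_le_sum_sq_mul_sum dist_nonneg dist_nonneg dist_nonneg

theorem sq_dist_triangleCircumcenter (h : AffineIndependent ℝ ![A, B, C]) :
    dist (triangleCircumcenter A B C) A ^ 2 =
      (dist B C * dist C A * dist A B) ^ 2 / heronProduct (dist B C) (dist C A) (dist A B) := by
  have hsum (a b c : ℝ) : a ^ 2 * (a ^ 2 - b ^ 2 - c ^ 2) + b ^ 2 * (b ^ 2 - c ^ 2 - a ^ 2) +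
      c ^ 2 * (c ^ 2 - a ^ 2 - b ^ 2) = -heronProduct a b c := by
    unfold heronProduct
    ring
  have hheron := (heronProduct_dist_pos h).ne'
  rw [dist_comm, triangleCircumcenter, triangleCenter,
    sq_dist_centerMass_three (hsum _ _ _ ▸ neg_ne_zero.2 hheron), hsum, dist_self, dist_comm A C]
  field_simp
  unfold heronProduct
  ring

theorem triangleCircumcenter_rotate (A B C : E) :
    triangleCircumcenter B C A = triangleCircumcenter A B C :=
  triangleCenter_rotate _ A B C

theorem dist_triangleCircumcenter_eq_dist (h : AffineIndependent ℝ ![A, B, C]) :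
    dist (triangleCircumcenter A B C) B = dist (triangleCircumcenter A B C) A := by
  rw [← sq_eq_sq₀ dist_nonneg dist_nonneg, sq_dist_triangleCircumcenter h,
    ← triangleCircumcenter_rotate, sq_dist_triangleCircumcenter h.comm_left.comm_right]
  unfold heronProduct
  ring

end TriangleCenters

theorem stmt_13_general {E : Type*} [NormedAddCommGroup E] [InnerProductSpace ℝ E] {A B C : E}
    (h : AffineIndependent ℝ ![A, B, C]) :
    dist (triangleCircumcenter A B C) (triangleCentroid A B C) ≤
        dist (triangleCircumcenter A B C) (triangleIncenter A B C) ∧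
      dist (triangleCircumcenter A B C) (triangleIncenter A B C) ≤
        3 * dist (triangleCircumcenter A B C) (triangleCentroid A B C) := by
  have hBC := dist_lt_dist_add_dist_of_affineIndependent h
  have hCA := dist_lt_dist_add_dist_of_affineIndependent h.comm_left.comm_right
  have hAB := dist_lt_dist_add_dist_of_affineIndependent h.comm_right.comm_left
  have hs : 0 < dist B C + dist C A + dist A B := by linarith
  have hB : dist (triangleCircumcenter A B C) B = dist (triangleCircumcenter A B C) A :=
    dist_triangleCircumcenter_eq_dist h
  have hC : dist (triangleCircumcenter A B C) C = dist (triangleCircumcenter A B C) A := by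
    rw [← hB, ← triangleCircumcenter_rotate]
    exact dist_triangleCircumcenter_eq_dist h.comm_left.comm_right
  refine ⟨dist_triangleCentroid_le_dist_triangleIncenter hs rfl hB hC, ?_⟩
  have hsides := sum_sq_sub_prod_div_sum_le hBC hCA hAB
  rw [← sq_dist_triangleCircumcenter h] at hsides
  rw [← sq_le_sq₀ dist_nonneg (by positivity), mul_pow, sq_dist_triangleCentroid rfl hB hC,
    sq_dist_triangleIncenter hs.ne' rfl hB hC]
  linarith

theorem stmt_13 (A B C : EuclideanSpace ℝ (Fin 2))
    (h : AffineIndependent ℝ ![A, B, C]) :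
    dist (tcenter (fun a b c => a^2*(a^2 - b^2 - c^2)) A B C) (tcenter (fun a b c => (1:Real)) A B C) ≤ dist (tcenter (fun a b c => a^2*(a^2 - b^2 - c^2)) A B C) (tcenter (fun a b c => a) A B C) ∧
      dist (tcenter (fun a b c => a^2*(a^2 - b^2 - c^2)) A B C) (tcenter (fun a b c => a) A B C) ≤ 3 * dist (tcenter (fun a b c => a^2*(a^2 - b^2 - c^2)) A B C) (tcenter (fun a b c => (1:Real)) A B C) := by
  simp only [tcenter_eq_triangleCenter]
  exact stmt_13_general h
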